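/- Let l ≠ 0 be real. Then each of the two equilibrium points x* = (0, l, −l, 0) and x* = (0, 0, 0, 0) of the system (Q) is stable in the Lyapunov sense: for every ε > 0 there exists δ > 0 such that every solution x = (a,b,c,d) of (Q) defined on an interval [0,T) (0 < T ≤ ∞) with |x(0) − x*| < δ satisfies |x(t) − x*| < ε for all t ∈ [0,T). -/

import Mathlib

/-- A quadruple of functions solves the system (Q)
`a' = −a² − bc + lc`, `b' = −(a+d)b + ld`, `c' = −(a+d)c − la`, `d' = −d² − bc − lb`
on the set `J` (one-sided derivatives at boundary points of `J`). -/
def SolvesQ (l : ℝ) (a b c d : ℝ → ℝ) (J : Set ℝ) : Prop :=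
  ∀ t ∈ J,
    HasDerivWithinAt a (-(a t) ^ 2 - b t * c t + l * c t) J t ∧
    HasDerivWithinAt b (-(a t + d t) * b t + l * d t) J t ∧
    HasDerivWithinAt c (-(a t + d t) * c t - l * a t) J t ∧
    HasDerivWithinAt d (-(d t) ^ 2 - b t * c t - l * b t) J t

/-!
The substitution `Q = P M⁻¹` turns the Riccati equation `Q' = -Q² - X Q` into the linear system
`M' = P`, `P' = -X P`. Solving it with `M(0) = 1`, `P(0) = Q(0)` gives
`Q(t) (1 + X⁻¹ (1 - exp(-tX)) Q(0)) = exp(-tX) Q(0)` whenever `X` is invertible. If `X` is moreover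
skew-adjoint, then `exp(-tX)` is unitary, hence bounded in `t`; for small `Q(0)` the factor on the
left is a perturbation of `1` of size at most `1/2`, and `‖Q(t)‖` is bounded by a multiple of
`‖Q(0)‖`. The second equilibrium `-X` reduces to `0` because `Q ↦ (Q + X)⋆` maps solutions to
solutions.
-/

open Set NormedSpace

section LyapunovStability

variable {E : Type*} [NormedAddCommGroup E] [NormedSpace ℝ E]

/-- Lyapunov stability, forward in time, of the point `e` for the autonomous equation `x' = v x`.
Solutions live on an arbitrary interval `J` with left endpoint `0 ∈ J`. -/
def IsLyapunovStable (v : E → E) (e : E) : Prop :=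
  ∀ ε > 0, ∃ δ > 0, ∀ J : Set ℝ, J.OrdConnected → IsLeast J 0 →
    ∀ x : ℝ → E, IsIntegralCurveOn x (fun _ => v) J → ‖x 0 - e‖ < δ → ∀ t ∈ J, ‖x t - e‖ < ε

theorem eq_zero_of_isIntegralCurveOn_clm {J : Set ℝ} {t₀ t : ℝ} {L : ℝ → E →L[ℝ] E} {x : ℝ → E}
    (hJ : J.OrdConnected) (ht₀ : IsLeast J t₀) (hL : ContinuousOn L J)
    (hx : IsIntegralCurveOn x (fun s => L s) J) (hx₀ : x t₀ = 0) (ht : t ∈ J) : x t = 0 := by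
  have hsub : Icc t₀ t ⊆ J := hJ.out ht₀.1 ht
  obtain ⟨K, hK⟩ := isCompact_Icc.exists_bound_of_continuousOn (hL.mono hsub)
  have hright : ∀ s ∈ Ico t₀ t, HasDerivWithinAt x (L s (x s)) (Ici s) s := fun s hs =>
    (hx.mono hsub s (Ico_subset_Icc_self hs)).mono_of_mem_nhdsWithin (Icc_mem_nhdsGE_of_mem hs)
  exact eq_zero_of_abs_deriv_le_mul_abs_self_of_eq_zero_right (hx.continuousOn.mono hsub) hright
    hx₀ (fun s hs => (L s).le_of_opNorm_le (hK s (Ico_subset_Icc_self hs)) _)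
    t (right_mem_Icc.2 (ht₀.2 ht))

end LyapunovStability

section Riccati

/-- The vector field of the matrix Riccati equation `Q' = -Q² - X Q`, in an arbitrary ring. -/
def riccatiField {A : Type*} [Ring A] (X Q : A) : A :=
  -Q ^ 2 - X * Q

variable {A : Type*} [NormedRing A]

theorem norm_le_two_mul_of_mul_one_add_eq {Q R P : A} (hR : ‖R‖ ≤ 1 / 2)
    (h : Q * (1 + R) = P) : ‖Q‖ ≤ 2 * ‖P‖ := by
  have hQR : ‖Q * R‖ ≤ ‖Q‖ * (1 / 2) := norm_mul_le_of_le le_rfl hR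
  have hQ : P - Q * R = Q := by rw [← h]; noncomm_ring
  have htri : ‖P - Q * R‖ ≤ ‖P‖ + ‖Q * R‖ := norm_sub_le _ _
  rw [hQ] at htri
  linarith

variable [NormedAlgebra ℝ A] {J : Set ℝ} {Q : ℝ → A}

/- The defect `Q M - P` solves the linear equation `w' = -(Q + X) w`. -/
theorem riccati_mul_eq_of_linearization {X : A} {M P : ℝ → A} {t : ℝ} (hJ : J.OrdConnected)
    (h0 : IsLeast J 0) (hQ : IsIntegralCurveOn Q (fun _ => riccatiField X) J)
    (hM : ∀ s ∈ J, HasDerivWithinAt M (P s) J s)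
    (hP : ∀ s ∈ J, HasDerivWithinAt P (-X * P s) J s)
    (hinit : Q 0 * M 0 = P 0) (ht : t ∈ J) : Q t * M t = P t := by
  let L : ℝ → A →L[ℝ] A := fun s => ContinuousLinearMap.mul ℝ A (-(Q s + X))
  have hL : ContinuousOn L J :=
    (ContinuousLinearMap.mul ℝ A).continuous.comp_continuousOn
      (hQ.continuousOn.add continuousOn_const).neg
  have hdefect : IsIntegralCurveOn (fun s => Q s * M s - P s) (fun s => L s) J := fun s hs => by
    refine (((hQ s hs).mul (hM s hs)).sub (hP s hs)).congr_deriv ?_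
    simp only [L, riccatiField, ContinuousLinearMap.mul_apply']
    noncomm_ring
  exact sub_eq_zero.1 <|
    eq_zero_of_isIntegralCurveOn_clm hJ h0 hL hdefect (sub_eq_zero.2 hinit) ht

section Exponential

variable [CompleteSpace A] {X : Aˣ}

theorem riccati_mul_eq_exp_mul {t : ℝ} (hJ : J.OrdConnected) (h0 : IsLeast J 0)
    (hQ : IsIntegralCurveOn Q (fun _ => riccatiField (X : A)) J) (ht : t ∈ J) :
    Q t * (1 + ↑X⁻¹ * (1 - exp (t • -(X : A))) * Q 0) = exp (t • -(X : A)) * Q 0 := by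
  have hexp (s : ℝ) : HasDerivAt (fun r : ℝ => exp (r • -(X : A)))
      (-(X : A) * exp (s • -(X : A))) s := hasDerivAt_exp_smul_const' _ _
  refine riccati_mul_eq_of_linearization (X := (X : A))
    (M := fun s => 1 + ↑X⁻¹ * (1 - exp (s • -(X : A))) * Q 0)
    (P := fun s => exp (s • -(X : A)) * Q 0) hJ h0 hQ (fun s _ => ?_) (fun s _ => ?_) ?_ ht
  · have hM := ((((hexp s).const_sub 1).const_mul (↑X⁻¹ : A)).mul_const (Q 0)).const_add 1
    refine (hM.congr_deriv ?_).hasDerivWithinAt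
    simp only [neg_mul, neg_neg, Units.inv_mul_cancel_left]
  · exact (((hexp s).mul_const (Q 0)).congr_deriv (mul_assoc _ _ _)).hasDerivWithinAt
  · simp only [zero_smul, exp_zero, sub_self, mul_zero, zero_mul, add_zero, mul_one, one_mul]

theorem norm_riccati_le {K t : ℝ} (hJ : J.OrdConnected) (h0 : IsLeast J 0)
    (hQ : IsIntegralCurveOn Q (fun _ => riccatiField (X : A)) J) (ht : t ∈ J)
    (hK : ‖exp (t • -(X : A))‖ ≤ K)
    (hsmall : ‖(↑X⁻¹ : A)‖ * (‖(1 : A)‖ + K) * ‖Q 0‖ ≤ 1 / 2) :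
    ‖Q t‖ ≤ 2 * K * ‖Q 0‖ := by
  have hR : ‖↑X⁻¹ * (1 - exp (t • -(X : A))) * Q 0‖ ≤ 1 / 2 :=
    (norm_mul_le_of_le (norm_mul_le_of_le le_rfl (norm_sub_le_of_le le_rfl hK)) le_rfl).trans hsmall
  calc ‖Q t‖ ≤ 2 * ‖exp (t • -(X : A)) * Q 0‖ :=
        norm_le_two_mul_of_mul_one_add_eq hR (riccati_mul_eq_exp_mul hJ h0 hQ ht)
    _ ≤ 2 * (K * ‖Q 0‖) := by gcongr; exact norm_mul_le_of_le hK le_rfl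
    _ = 2 * K * ‖Q 0‖ := (mul_assoc _ _ _).symm

theorem isLyapunovStable_riccatiField_zero {K : ℝ}
    (hK : ∀ t : ℝ, 0 ≤ t → ‖exp (t • -(X : A))‖ ≤ K) :
    IsLyapunovStable (riccatiField (X : A)) 0 := by
  intro ε hε
  have hK0 : 0 ≤ K := (norm_nonneg _).trans (hK 0 le_rfl)
  obtain ⟨δ₁, hδ₁, hsmall⟩ :=
    exists_pos_mul_lt (one_half_pos (α := ℝ)) (‖(↑X⁻¹ : A)‖ * (‖(1 : A)‖ + K))
  obtain ⟨δ₂, hδ₂, hKε⟩ := exists_pos_mul_lt hε (2 * K)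
  refine ⟨min δ₁ δ₂, lt_min hδ₁ hδ₂, fun J hJ h0 Q hQ hQ0 t ht => ?_⟩
  rw [sub_zero] at hQ0 ⊢
  obtain ⟨hQ₁, hQ₂⟩ := lt_min_iff.1 hQ0
  calc ‖Q t‖ ≤ 2 * K * ‖Q 0‖ :=
        norm_riccati_le hJ h0 hQ ht (hK t (h0.2 ht)) (hsmall.le.trans' (by gcongr))
    _ ≤ 2 * K * δ₂ := by gcongr
    _ < ε := hKε

end Exponential

section SkewAdjoint

variable [StarRing A] [StarModule ℝ A] [NormedStarGroup A]

theorem isIntegralCurveOn_riccatiField_star_add {X : A} (hX : X ∈ skewAdjoint A)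
    (hQ : IsIntegralCurveOn Q (fun _ => riccatiField X) J) :
    IsIntegralCurveOn (fun t => star (Q t + X)) (fun _ => riccatiField X) J := fun t ht => by
  refine ((hQ t ht).add_const X).star.congr_deriv ?_
  simp only [riccatiField, star_sub, star_neg, star_pow, star_mul, star_add,
    skewAdjoint.mem_iff.1 hX]
  noncomm_ring

theorem IsLyapunovStable.riccatiField_neg {X : A} (hX : X ∈ skewAdjoint A)
    (h : IsLyapunovStable (riccatiField X) 0) : IsLyapunovStable (riccatiField X) (-X) := by
  intro ε hε
  obtain ⟨δ, hδ, hstable⟩ := h ε hε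
  refine ⟨δ, hδ, fun J hJ h0 Q hQ hQ0 t ht => ?_⟩
  have hstar := hstable J hJ h0 _ (isIntegralCurveOn_riccatiField_star_add hX hQ)
  simp only [sub_zero, norm_star] at hstar
  simpa only [sub_neg_eq_add] using hstar (by simpa only [sub_neg_eq_add] using hQ0) t ht

theorem isLyapunovStable_riccatiField_of_mem_skewAdjoint [CompleteSpace A] {X : Aˣ} {K : ℝ}
    (hX : (X : A) ∈ skewAdjoint A) (hK : ∀ U ∈ unitary A, ‖U‖ ≤ K) :
    IsLyapunovStable (riccatiField (X : A)) 0 ∧ IsLyapunovStable (riccatiField (X : A)) (-X) := by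
  let _ : NormedAlgebra ℚ A := .restrictScalars ℚ ℝ A
  have hzero : IsLyapunovStable (riccatiField (X : A)) 0 :=
    isLyapunovStable_riccatiField_zero fun t _ =>
      hK _ (exp_mem_unitary_of_mem_skewAdjoint (skewAdjoint.smul_mem t (neg_mem hX)))
  exact ⟨hzero, hzero.riccatiField_neg hX⟩

end SkewAdjoint

end Riccati

open scoped Matrix.Norms.Frobenius

theorem frobenius_norm_le_card_of_mem_unitaryGroup {𝕜 n : Type*} [RCLike 𝕜] [Fintype n]
    [DecidableEq n] {U : Matrix n n 𝕜} (hU : U ∈ Matrix.unitaryGroup n 𝕜) :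
    ‖U‖ ≤ Fintype.card n := by
  have hsum : ∑ i, ∑ j, ‖U i j‖ ^ (2 : ℝ) ≤ (Fintype.card n : ℝ) ^ 2 := by
    calc ∑ i, ∑ j, ‖U i j‖ ^ (2 : ℝ) ≤ ∑ _i : n, ∑ _j : n, (1 : ℝ) := by
          gcongr with i _ j _
          exact Real.rpow_le_one (norm_nonneg _) (entry_norm_bound_of_unitary hU i j) zero_le_two
      _ = (Fintype.card n : ℝ) ^ 2 := by simp [sq]
  rw [Matrix.frobenius_norm_def, ← Real.sqrt_eq_rpow]
  exact Real.sqrt_le_iff.2 ⟨Nat.cast_nonneg _, hsum⟩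

theorem frobenius_norm_fin_two (M : Matrix (Fin 2) (Fin 2) ℝ) :
    ‖M‖ = Real.sqrt (M 0 0 ^ 2 + M 0 1 ^ 2 + M 1 0 ^ 2 + M 1 1 ^ 2) := by
  rw [Matrix.frobenius_norm_def, ← Real.sqrt_eq_rpow]
  simp [Fin.sum_univ_two, add_assoc]

/-- The matrix `l L` of the Coriolis term in the Riccati equation `Q' = -Q² - l L Q`, where `L` is
the rotation by a right angle. -/
def coriolisMatrix (l : ℝ) : Matrix (Fin 2) (Fin 2) ℝ :=
  !![0, -l; l, 0]

theorem neg_coriolisMatrix (l : ℝ) : -coriolisMatrix l = !![0, l; -l, 0] := by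
  simp [coriolisMatrix]

theorem isUnit_coriolisMatrix {l : ℝ} (hl : l ≠ 0) : IsUnit (coriolisMatrix l) := by
  simpa [Matrix.isUnit_iff_isUnit_det, coriolisMatrix, Matrix.det_fin_two_of] using hl

theorem coriolisMatrix_mem_skewAdjoint (l : ℝ) :
    coriolisMatrix l ∈ skewAdjoint (Matrix (Fin 2) (Fin 2) ℝ) := by
  rw [skewAdjoint.mem_iff, neg_coriolisMatrix]
  ext i j
  fin_cases i <;> fin_cases j <;> simp [coriolisMatrix]

theorem isLyapunovStable_coriolis {l : ℝ} (hl : l ≠ 0) :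
    IsLyapunovStable (riccatiField (coriolisMatrix l)) 0 ∧
      IsLyapunovStable (riccatiField (coriolisMatrix l)) (-coriolisMatrix l) := by
  obtain ⟨X, hX⟩ := isUnit_coriolisMatrix hl
  rw [← hX]
  exact isLyapunovStable_riccatiField_of_mem_skewAdjoint
    (hX ▸ coriolisMatrix_mem_skewAdjoint l) fun _ => frobenius_norm_le_card_of_mem_unitaryGroup

theorem riccatiField_coriolisMatrix (l p q r s : ℝ) :
    riccatiField (coriolisMatrix l) !![p, q; r, s] =
      !![-p ^ 2 - q * r + l * r, -(p + s) * q + l * s;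
        -(p + s) * r - l * p, -s ^ 2 - q * r - l * q] := by
  ext i j
  fin_cases i <;> fin_cases j <;>
    simp [riccatiField, coriolisMatrix, sq] <;> ring

theorem SolvesQ.isIntegralCurveOn {l : ℝ} {a b c d : ℝ → ℝ} {J : Set ℝ} (h : SolvesQ l a b c d J) :
    IsIntegralCurveOn (fun t => !![a t, b t; c t, d t])
      (fun _ => riccatiField (coriolisMatrix l)) J := fun t ht => by
  obtain ⟨ha, hb, hc, hd⟩ := h t ht
  beta_reduce
  rw [riccatiField_coriolisMatrix]
  refine hasDerivWithinAt_pi.2 fun i => hasDerivWithinAt_pi.2 fun j => ?_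
  fin_cases i <;> fin_cases j
  exacts [ha, hb, hc, hd]

/-- For `l ≠ 0`, each of the two equilibria `(0, l, −l, 0)` and
`(0, 0, 0, 0)` of the system (Q) is Lyapunov stable: for every `ε > 0` there is a
`δ > 0` such that every solution on `[0,T)` (with `0 < T ≤ ∞`) starting within
Euclidean distance `δ` of the equilibrium stays within distance `ε` for all times. -/
theorem stmt_12 (l : ℝ) (hl : l ≠ 0) (e : ℝ × ℝ × ℝ × ℝ)
    (he : e = (0, l, -l, 0) ∨ e = (0, 0, 0, 0)) :
    ∀ ε > 0, ∃ δ > 0, ∀ J : Set ℝ,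
      ((∃ T : ℝ, 0 < T ∧ J = Set.Ico 0 T) ∨ J = Set.Ici 0) →
      ∀ a b c d : ℝ → ℝ, SolvesQ l a b c d J →
        Real.sqrt ((a 0 - e.1) ^ 2 + (b 0 - e.2.1) ^ 2 + (c 0 - e.2.2.1) ^ 2 +
          (d 0 - e.2.2.2) ^ 2) < δ →
        ∀ t ∈ J,
          Real.sqrt ((a t - e.1) ^ 2 + (b t - e.2.1) ^ 2 + (c t - e.2.2.1) ^ 2 +
            (d t - e.2.2.2) ^ 2) < ε := by
  intro ε hε
  have hstable : IsLyapunovStable (riccatiField (coriolisMatrix l))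
      !![e.1, e.2.1; e.2.2.1, e.2.2.2] := by
    rcases he with rfl | rfl
    · exact neg_coriolisMatrix l ▸ (isLyapunovStable_coriolis hl).2
    · exact Matrix.eta_fin_two (0 : Matrix (Fin 2) (Fin 2) ℝ) ▸ (isLyapunovStable_coriolis hl).1
  obtain ⟨δ, hδ, hδε⟩ := hstable ε hε
  refine ⟨δ, hδ, fun J hJ a b c d hQ h0 t ht => ?_⟩
  have hinterval : J.OrdConnected ∧ IsLeast J 0 := by
    rcases hJ with ⟨T, hT, rfl⟩ | rfl
    · exact ⟨ordConnected_Ico, isLeast_Ico hT⟩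
    · exact ⟨ordConnected_Ici, isLeast_Ici⟩
  have hnorm := hδε J hinterval.1 hinterval.2 _ hQ.isIntegralCurveOn
  simp only [frobenius_norm_fin_two] at hnorm
  exact hnorm h0 t ht
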